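/- Let n ≥ 4, let 0 < Z ≤ 2^n and set a = ⌊log_2 Z⌋. Let s and c be integers with 2^n - 2^s < c < 2^n - 2^{s-1} and s > a. Then every 2^n-periodic binary sequence S with odd Hamming weight in one period and L_1(S) = c satisfies L_{1;Z}(S) ∈ {c} ∪ {2^n - 2^t : a ≤ t ≤ s - 1}. -/

import Mathlib

/-- Generating polynomial `S^N(x) = s_0 + s_1 x + ... + s_{N-1} x^{N-1}` of one period
of an `N`-periodic binary sequence. -/
noncomputable def genPoly {N : ℕ} (S : Fin N → ZMod 2) : Polynomial (ZMod 2) :=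
  ∑ i : Fin N, Polynomial.C (S i) * Polynomial.X ^ (i : ℕ)

/-- Linear complexity `L(S) = N - deg (gcd (1 - x^N, S^N(x)))`. -/
noncomputable def linComp {N : ℕ} (S : Fin N → ZMod 2) : ℕ :=
  N - (EuclideanDomain.gcd (1 - Polynomial.X ^ N) (genPoly S)).natDegree

/-- Hamming weight of one period of an `N`-periodic binary sequence. -/
def wt {N : ℕ} (T : Fin N → ZMod 2) : ℕ :=
  (Finset.univ.filter (fun i => T i ≠ 0)).card

/-- `k`-error linear complexity `L_{N,k}(S)`. -/
noncomputable def errLC {N : ℕ} (S : Fin N → ZMod 2) (k : ℕ) : ℕ :=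
  sInf {c | ∃ T : Fin N → ZMod 2, wt T ≤ k ∧ linComp (S + T) = c}

/-- `k`-error linear complexity with a zone of length `Z`: `L_{N,k;Z}(S)`. -/
noncomputable def errLCZone {N : ℕ} (S : Fin N → ZMod 2) (k Z : ℕ) : ℕ :=
  sInf {c | ∃ T : Fin N → ZMod 2, wt T ≤ k ∧ (∀ i : Fin N, Z ≤ (i : ℕ) → T i = 0) ∧
    linComp (S + T) = c}

/-- `E_1(j)`: the sequence whose only nonzero term in one period is a `1` at position `j`. -/
def E1 {N : ℕ} (j : Fin N) : Fin N → ZMod 2 :=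
  fun i => if i = j then 1 else 0


open Polynomial in
theorem aux_one_sub (n : ℕ) : (1 - X ^ (2^n) : (ZMod 2)[X]) = (X - 1) ^ (2^n) := by
  rw [sub_pow_char_pow, one_pow]
  have h : (-1 : (ZMod 2)[X]) = 1 := by
    have := CharTwo.neg_eq (1 : (ZMod 2)[X])
    exact this
  linear_combination (X ^ (2^n) - 1 : (ZMod 2)[X]) * h

open Polynomial in
theorem aux_prime : Prime (X - 1 : (ZMod 2)[X]) := by
  simpa using prime_X_sub_C (1 : ZMod 2)

open Polynomial in
theorem aux_linComp (n d : ℕ) (hd : d ≤ 2^n) (S : Fin (2^n) → ZMod 2) :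
    linComp S ≤ 2^n - d ↔ (X - 1 : (ZMod 2)[X])^d ∣ genPoly S := by
  unfold linComp
  have hg : EuclideanDomain.gcd (1 - X ^ (2^n)) (genPoly S) ∣ (X - 1 : (ZMod 2)[X])^(2^n) := by
    rw [← aux_one_sub]; exact EuclideanDomain.gcd_dvd_left _ _
  obtain ⟨k, hk, hassoc⟩ := (dvd_prime_pow aux_prime _).1 hg
  have hdeg : (EuclideanDomain.gcd (1 - X ^ (2^n)) (genPoly S)).natDegree = k := by
    rw [natDegree_eq_of_degree_eq (degree_eq_degree_of_associated hassoc), natDegree_pow]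
    have : (X - 1 : (ZMod 2)[X]).natDegree = 1 := by simpa using natDegree_X_sub_C (1 : ZMod 2)
    rw [this, mul_one]
  rw [hdeg]
  have h1 : 2^n - k ≤ 2^n - d ↔ d ≤ k := by omega
  rw [h1]
  constructor
  · intro h
    exact ((pow_dvd_pow _ h).trans hassoc.symm.dvd).trans (EuclideanDomain.gcd_dvd_right _ _)
  · intro h
    have h2 : (X - 1 : (ZMod 2)[X])^d ∣ EuclideanDomain.gcd (1 - X ^ (2^n)) (genPoly S) := by
      apply EuclideanDomain.dvd_gcd _ h
      rw [aux_one_sub]; exact pow_dvd_pow _ hd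
    exact (pow_dvd_pow_iff aux_prime.ne_zero aux_prime.not_isUnit).1 (h2.trans hassoc.dvd)

open Polynomial in
theorem aux_genPoly_add {N : ℕ} (S T : Fin N → ZMod 2) :
    genPoly (S + T) = genPoly S + genPoly T := by
  simp [genPoly, add_mul, Finset.sum_add_distrib]

open Polynomial in
theorem aux_genPoly_single {N : ℕ} (j : Fin N) :
    genPoly (Pi.single j 1) = (X ^ (j : ℕ) : (ZMod 2)[X]) := by
  unfold genPoly
  rw [Finset.sum_eq_single j]
  · simp
  · intro b _ hb; simp [Pi.single_eq_of_ne hb]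
  · simp

theorem aux_zmod2 (x : ZMod 2) (h : x ≠ 0) : x = 1 := by
  revert x; decide

open Polynomial in
theorem aux_odd {N : ℕ} (S : Fin N → ZMod 2) (hodd : Odd (wt S)) : (genPoly S).eval 1 = 1 := by
  have h1 : (genPoly S).eval 1 = (wt S : ZMod 2) := by
    unfold genPoly wt
    rw [eval_finsetSum, Finset.card_filter]
    push_cast
    apply Finset.sum_congr rfl
    intro i _
    by_cases h : S i = 0
    · simp [h]
    · simp [aux_zmod2 _ h]
  rw [h1]
  exact (ZMod.natCast_eq_one_iff_odd).2 hodd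

theorem aux_wt {N : ℕ} (T : Fin N → ZMod 2) (h : wt T ≤ 1) :
    T = 0 ∨ ∃ j, T = Pi.single j 1 := by
  by_cases h0 : T = 0
  · exact Or.inl h0
  right
  obtain ⟨j, hj⟩ := Function.ne_iff.1 h0
  refine ⟨j, ?_⟩
  funext i
  by_cases hi : i = j
  · subst hi; simpa using aux_zmod2 _ hj
  · rw [Pi.single_eq_of_ne hi]
    by_contra hne
    exact hi (Finset.card_le_one.1 h i (by simpa using hne) j (by simpa using hj))

theorem aux_wt_single {N : ℕ} (j : Fin N) : wt (Pi.single j 1 : Fin N → ZMod 2) ≤ 1 := by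
  unfold wt
  apply Finset.card_le_one.2
  have key : ∀ i, (Pi.single j 1 : Fin N → ZMod 2) i ≠ 0 → i = j := by
    intro i hi
    by_contra h
    exact hi (Pi.single_eq_of_ne h _)
  intro a ha b hb
  rw [key a (by simpa using ha), key b (by simpa using hb)]

open Polynomial in
theorem aux_B1' (t i k : ℕ) : (X - 1 : (ZMod 2)[X])^(2^t) ∣ X^i + X^(i + 2^t * k) := by
  have h : (X^i + X^(i + 2^t * k) : (ZMod 2)[X]) = X^i * (X^(2^t*k) - 1) := by
    have h : (-1 : (ZMod 2)[X]) = 1 := CharTwo.neg_eq (1 : (ZMod 2)[X])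
    rw [pow_add]
    linear_combination (- X^i : (ZMod 2)[X]) * h
  rw [h]
  apply Dvd.dvd.mul_left
  have h2 : (X - 1 : (ZMod 2)[X])^(2^t) = X^(2^t) - 1 := by
    rw [sub_pow_char_pow, one_pow]
  rw [h2, pow_mul]
  simpa using sub_dvd_pow_sub_pow (X^(2^t) : (ZMod 2)[X]) 1 k

open Polynomial in
theorem aux_B1 (t i j : ℕ) (h : i ≡ j [MOD 2^t]) : (X - 1 : (ZMod 2)[X])^(2^t) ∣ X^i + X^j := by
  rcases le_total i j with hij | hij
  · obtain ⟨k, hk⟩ := (Nat.modEq_iff_dvd' hij).1 h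
    have : j = i + 2^t * k := by omega
    rw [this]; exact aux_B1' _ _ _
  · obtain ⟨k, hk⟩ := (Nat.modEq_iff_dvd' hij).1 h.symm
    have : i = j + 2^t * k := by omega
    rw [this, add_comm]; exact aux_B1' _ _ _

open Polynomial in
theorem aux_B2' (t i e : ℕ) (he : e ≠ 0)
    (h : (X - 1 : (ZMod 2)[X])^(2^t+1) ∣ X^i + X^(i + e)) : 2^(t+1) ∣ e := by
  have hx : (X^i + X^(i + e) : (ZMod 2)[X]) = X^i * (X^e - 1) := by
    have h : (-1 : (ZMod 2)[X]) = 1 := CharTwo.neg_eq (1 : (ZMod 2)[X])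
    rw [pow_add]
    linear_combination (- X^i : (ZMod 2)[X]) * h
  rw [hx] at h
  have hcop : IsCoprime ((X - 1 : (ZMod 2)[X])^(2^t+1)) (X^i) := by
    apply IsCoprime.pow
    exact ⟨-1, 1, by ring⟩
  have h := hcop.dvd_of_dvd_mul_left h
  obtain ⟨r, m, hm, rfl⟩ := Nat.exists_eq_two_pow_mul_odd he
  by_cases hrt : t + 1 ≤ r
  · exact (pow_dvd_pow 2 hrt).mul_right m
  exfalso
  have hle : 2^r ≤ 2^t := Nat.pow_le_pow_right (by norm_num) (by omega)
  have h : (X - 1 : (ZMod 2)[X])^(2^r+1) ∣ X^(2^r*m) - 1 :=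
    (pow_dvd_pow _ (by omega)).trans h
  have hq : (X^(2^r*m) - 1 : (ZMod 2)[X]) =
      (X-1)^(2^r) * (∑ l ∈ Finset.range m, X^l)^(2^r) := by
    rw [← mul_pow, mul_comm (X-1), geom_sum_mul, sub_pow_char_pow, one_pow, ← pow_mul, mul_comm m]
  rw [hq, pow_succ] at h
  have h := (mul_dvd_mul_iff_left (pow_ne_zero _ aux_prime.ne_zero)).1 h
  have h := aux_prime.dvd_of_dvd_pow h
  have h' : (X - C 1 : (ZMod 2)[X]) ∣ ∑ l ∈ Finset.range m, X^l := by simpa using h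
  rw [dvd_iff_isRoot, IsRoot, eval_finsetSum] at h'
  simp at h'
  rw [(ZMod.natCast_eq_one_iff_odd).2 hm] at h'
  exact one_ne_zero h'

open Polynomial in
theorem aux_B2 (t i j : ℕ)
    (h : (X - 1 : (ZMod 2)[X])^(2^t+1) ∣ X^i + X^j) : i ≡ j [MOD 2^(t+1)] := by
  rcases lt_trichotomy i j with hij | hij | hij
  · obtain ⟨e, rfl⟩ := Nat.exists_eq_add_of_lt hij
    have := aux_B2' t i (e+1) (by omega) h
    rw [Nat.modEq_iff_dvd' (by omega)]
    convert this using 1; omega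
  · rw [hij]
  · obtain ⟨e, rfl⟩ := Nat.exists_eq_add_of_lt hij
    rw [add_comm (X ^ _)] at h
    have := aux_B2' t j (e+1) (by omega) h
    refine Nat.ModEq.symm ?_
    rw [Nat.modEq_iff_dvd' (by omega)]
    convert this using 1; omega

open Polynomial in
theorem aux_no_zero {N : ℕ} (S : Fin N → ZMod 2) (hodd : Odd (wt S)) (d : ℕ) (hd : d ≠ 0)
    (h : (X - 1 : (ZMod 2)[X])^d ∣ genPoly S) : False := by
  have h1 : (X - C 1 : (ZMod 2)[X]) ∣ genPoly S := by
    simpa using (dvd_pow_self (X - 1 : (ZMod 2)[X]) hd).trans h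
  rw [dvd_iff_isRoot, IsRoot, aux_odd S hodd] at h1
  exact one_ne_zero h1

/-- Case `s > a`: for every odd-weight sequence with `L_1(S) = c`, the value
`L_{1;Z}(S)` lies in `{c} ∪ {2^n - 2^t : a ≤ t ≤ s-1}`. -/
theorem stmt9 (n Z s c : ℕ) (hn : 4 ≤ n) (hZ0 : 0 < Z) (hZ : Z ≤ 2^n)
    (h1 : 2^n - 2^s < c) (h2 : c < 2^n - 2^(s-1)) (hsa : Nat.log 2 Z < s)
    (S : Fin (2^n) → ZMod 2) (hodd : Odd (wt S)) (hc : errLC S 1 = c) :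
    errLCZone S 1 Z = c ∨
      ∃ t, Nat.log 2 Z ≤ t ∧ t ≤ s - 1 ∧ errLCZone S 1 Z = 2^n - 2^t := by
  classical
  have hs : s - 1 < n := by
    by_contra hcon
    have : 2^n ≤ 2^(s-1) := Nat.pow_le_pow_right (by norm_num) (by omega)
    omega
  have hsn : 2^s ≤ 2^n := Nat.pow_le_pow_right (by norm_num) (by omega)
  have char2 : ∀ p : Polynomial (ZMod 2), p + p = 0 := fun p => CharTwo.add_self_eq_zero p
  obtain ⟨M, hM⟩ : ∃ M, M = 2^n - c := ⟨_, rfl⟩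
  have hpos : 0 < 2^(s-1) := by positivity
  have hcM : c = 2^n - M := by omega
  have hMn : M ≤ 2^n := by omega
  have hpos2 : 0 < 2^s := by positivity
  have hMs : M < 2^s := by omega
  have hsM : 2^(s-1) < M := by omega
  -- the optimal single error position
  have hne : {c | ∃ T : Fin (2^n) → ZMod 2, wt T ≤ 1 ∧ linComp (S + T) = c}.Nonempty :=
    ⟨_, 0, by simp [wt], rfl⟩
  have hmem := Nat.sInf_mem hne
  change errLC S 1 ∈ _ at hmem
  rw [hc] at hmem
  obtain ⟨T0, hT0, hT0c⟩ := hmem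
  have hd0 := (aux_linComp n M hMn (S + T0)).1 (hT0c.trans hcM).le
  obtain ⟨j0, rfl⟩ : ∃ j, T0 = Pi.single j 1 := by
    rcases aux_wt T0 hT0 with rfl | h
    · rw [add_zero] at hd0
      exact (aux_no_zero S hodd M (by omega) hd0).elim
    · exact h
  rw [aux_genPoly_add, aux_genPoly_single] at hd0
  -- the zone minimum
  have hneZ : {c | ∃ T : Fin (2^n) → ZMod 2, wt T ≤ 1 ∧
      (∀ i : Fin (2^n), Z ≤ (i : ℕ) → T i = 0) ∧ linComp (S + T) = c}.Nonempty :=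
    ⟨_, 0, by simp [wt], by simp, rfl⟩
  have hmemZ := Nat.sInf_mem hneZ
  change errLCZone S 1 Z ∈ _ at hmemZ
  obtain ⟨T1, hT1, hT1Z, hT1c⟩ := hmemZ
  have hcle : c ≤ errLCZone S 1 Z := by
    rw [← hc]
    exact Nat.sInf_le ⟨T1, hT1, hT1c⟩
  -- upper bounds from positions in the zone
  have hup : ∀ d t j, d ≤ M → d ≤ 2^t → j < Z → j ≡ j0 [MOD 2^t] →
      errLCZone S 1 Z ≤ 2^n - d := by
    intro d t j hdM hdt hj hmod
    let J : Fin (2^n) := ⟨j, by omega⟩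
    have hle : errLCZone S 1 Z ≤ linComp (S + Pi.single J 1) := by
      refine Nat.sInf_le ⟨Pi.single J 1, aux_wt_single J, ?_, rfl⟩
      intro i hi
      apply Pi.single_eq_of_ne
      rintro rfl
      have : j < Z := hj
      simp only [J] at hi
      omega
    refine hle.trans ((aux_linComp n d (by omega) _).2 ?_)
    rw [aux_genPoly_add, aux_genPoly_single]
    have e1 := (pow_dvd_pow _ hdM).trans hd0
    have e2 := (pow_dvd_pow _ hdt).trans (aux_B1 t j j0 hmod)
    have e3 := dvd_add e1 e2
    convert e3 using 1
    linear_combination (-1 : Polynomial (ZMod 2)) * char2 (Polynomial.X ^ (j0 : ℕ))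
  by_cases hcase : ∃ j, j < Z ∧ j ≡ j0 [MOD 2^s]
  · left
    obtain ⟨j, hj, hmod⟩ := hcase
    have := hup M s j le_rfl hMs.le hj hmod
    omega
  right
  let P : ℕ → Prop := fun t => ∃ j, j < Z ∧ j ≡ j0 [MOD 2^t]
  have hPa : P (Nat.log 2 Z) := by
    refine ⟨j0 % 2^(Nat.log 2 Z), ?_, Nat.mod_modEq _ _⟩
    exact (Nat.mod_lt _ (by positivity)).trans_le (Nat.pow_log_le_self 2 (by omega))
  have has : Nat.log 2 Z ≤ s - 1 := by omega
  obtain ⟨t, ht⟩ : ∃ t, t = Nat.findGreatest P (s-1) := ⟨_, rfl⟩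
  have hPt : P t := ht ▸ Nat.findGreatest_spec has hPa
  have hts : t ≤ s - 1 := ht ▸ Nat.findGreatest_le _
  have hat : Nat.log 2 Z ≤ t := ht ▸ Nat.le_findGreatest has hPa
  have hPt1 : ¬ P (t+1) := by
    by_cases h : t + 1 ≤ s - 1
    · exact Nat.findGreatest_is_greatest (by omega) h
    · have : t + 1 = s := by omega
      rw [this]; exact hcase
  have hpow : 2^t ≤ 2^(s-1) := Nat.pow_le_pow_right (by norm_num) hts
  refine ⟨t, hat, hts, ?_⟩
  obtain ⟨j, hj, hmod⟩ := hPt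
  have hle := hup (2^t) t j (by omega) le_rfl hj hmod
  refine le_antisymm hle ?_
  by_contra hlt
  have hb : errLCZone S 1 Z ≤ 2^n - (2^t+1) := by
    have hlt' := not_le.1 hlt
    exact Nat.le_sub_of_add_le (by have := Nat.lt_sub_iff_add_lt.1 hlt'; omega)
  have hd1 := (aux_linComp n (2^t+1) (by omega) (S + T1)).1 (hT1c.le.trans hb)
  rcases aux_wt T1 hT1 with rfl | ⟨j1, rfl⟩
  · rw [add_zero] at hd1
    exact aux_no_zero S hodd _ (Nat.succ_ne_zero _) hd1
  · rw [aux_genPoly_add, aux_genPoly_single] at hd1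
    have hj1 : (j1 : ℕ) < Z := by
      by_contra h
      have := hT1Z j1 (by omega)
      simp at this
    apply hPt1
    refine ⟨j1, hj1, aux_B2 t j1 j0 ?_⟩
    have e1 := (pow_dvd_pow (Polynomial.X - 1 : Polynomial (ZMod 2))
      (show 2^t+1 ≤ M by omega)).trans hd0
    have e3 := dvd_add hd1 e1
    convert e3 using 1
    linear_combination (-1 : Polynomial (ZMod 2)) * char2 (genPoly S)
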